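/- Let D be a non-trivial, non-symmetric 2-(v,k,3) design with 3 dividing r, admitting a flag-transitive, point-primitive automorphism group G that is almost simple with socle X = PSL(2,q), where X acts point-primitively on D with point stabilizer X_α maximal in X. Then X_α is not isomorphic to PSL(2,q₀) with q = q₀ᵗ odd and t an odd prime; that is, the subfield case with q odd, q = q₀ᵗ, t an odd prime, and v = q₀^{t−1}(q₀^{2t}−1)/(q₀²−1), does not occur. -/

import Mathlib

/-!
Since `r (k - 1) = λ (v - 1)`, and since `G_α` permutes transitively the `r` blocks through `α`, the
replication number `r` divides both `λ (v - 1)` and `|G_α| = m |X_α|`, where `m = |G : X|`. If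
`|X_α| = |PSL(2,q₀)|` then `v ≡ t` modulo `q₀² - 1` and `q₀ ∣ v`, so `gcd (v - 1, |X_α|)` divides
`t - 1` and `r ≤ λ m (t - 1)`. With `λ v ≤ r²`, which follows from Fisher's inequality, this gives
`v ≤ λ (m (t - 1))²`.

As the centralizer of `X` is trivial, `G` embeds in `Aut X`, so `m ≤ |Aut X| / |X|`. For `q = pⁿ`
with `p` odd this is at most `2 n`: an automorphism of `PSL(2,q)` sends a transvection `u` to one of
the at most `q² - 1` elements of order `p`. One fixing `u` acts on the root group through an
additive map of `𝔽_q`, so if it sends the torus element of a primitive root `w` to the coset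
(modulo the root group) of the torus element of `x`, then `x²` is a root of the minimal polynomial
of `w²` over `𝔽_p`; this leaves at most `n q` images. An automorphism fixing both elements fixes the
Weyl element as well, so it is trivial.

Thus `v ≤ λ (2 n (t - 1))²` with `n` the exponent of `q = q₀ᵗ`, which is incompatible with
`v ≥ q₀³⁽ᵗ⁻¹⁾`.
-/

open scoped Pointwise
open Matrix

namespace FT

variable {Pt : Type*}

/-- `IsDesign 𝓑 k lam` says that the family `𝓑` of subsets of the point set `Pt` is the
block set of a `2-(v, k, lam)` design: every block has `k` points and any two distinct
points lie on exactly `lam` common blocks. -/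
structure IsDesign (𝓑 : Set (Set Pt)) (k lam : ℕ) : Prop where
  block_card : ∀ B ∈ 𝓑, Nat.card B = k
  pair_count : ∀ x y : Pt, x ≠ y → Nat.card {B : Set Pt | B ∈ 𝓑 ∧ x ∈ B ∧ y ∈ B} = lam

/-- The group `G` acts on the design with point set `Pt` and block set `𝓑` as a group of
automorphisms. -/
def ActsOn (G : Type*) [Group G] [MulAction G Pt] (𝓑 : Set (Set Pt)) : Prop :=
  ∀ (g : G), ∀ B ∈ 𝓑, g • B ∈ 𝓑

/-- The group `G` is transitive on the flags (incident point-block pairs) of the design. -/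
def FlagTransitive (G : Type*) [Group G] [MulAction G Pt] (𝓑 : Set (Set Pt)) : Prop :=
  ∀ B ∈ 𝓑, ∀ C ∈ 𝓑, ∀ x ∈ B, ∀ y ∈ C, ∃ g : G, g • B = C ∧ g • x = y

/-- The action of `G` on `Pt` is primitive: it is transitive and every block of
imprimitivity is trivial. -/
def PointPrimitive (G : Type*) [Group G] (Pt : Type*) [MulAction G Pt] : Prop :=
  MulAction.IsPretransitive G Pt ∧
    ∀ s : Set Pt, MulAction.IsBlock G s → s.Subsingleton ∨ s = Set.univ

/-- The number of blocks of `𝓑` through the point `x` (the replication number, for a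
flag-transitive design). -/
noncomputable def repNum (𝓑 : Set (Set Pt)) (x : Pt) : ℕ :=
  Nat.card {B : Set Pt | B ∈ 𝓑 ∧ x ∈ B}

/-- The projective general linear group `PGL(2,K)`, as the quotient of `GL(2,K)` by its
center. -/
abbrev PGL2 (K : Type*) [Field K] :=
  GL (Fin 2) K ⧸ Subgroup.center (GL (Fin 2) K)

/-- The projective special linear group `PSL(2,K)`. -/
abbrev PSL2 (K : Type*) [Field K] := Matrix.ProjectiveSpecialLinearGroup (Fin 2) K

end FT

open FT

namespace FT

section Design

variable {Pt : Type*} {𝓑 : Set (Set Pt)} {k lam : ℕ}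

open Classical in
/-- The real incidence matrix of a family `𝓑` of blocks, with rows indexed by points and columns
by blocks. -/
noncomputable def incMatrix (𝓑 : Set (Set Pt)) : Matrix Pt 𝓑 ℝ :=
  Matrix.of fun x B => if x ∈ B.1 then 1 else 0

lemma incMatrix_mul_transpose_apply [Fintype 𝓑] (x y : Pt) :
    (incMatrix 𝓑 * (incMatrix 𝓑)ᵀ) x y = Nat.card {B : Set Pt | B ∈ 𝓑 ∧ x ∈ B ∧ y ∈ B} := by
  classical
  have hcard : Nat.card {B : Set Pt | B ∈ 𝓑 ∧ x ∈ B ∧ y ∈ B} =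
      Nat.card {B : 𝓑 // x ∈ B.1 ∧ y ∈ B.1} :=
    Nat.card_congr (Equiv.subtypeSubtypeEquivSubtypeInter _ _).symm
  rw [hcard, Nat.card_eq_fintype_card, Fintype.card_subtype]
  simp [Matrix.mul_apply, incMatrix, ← ite_and, and_comm]

lemma incMatrix_mulVec_one [Fintype 𝓑] :
    incMatrix 𝓑 *ᵥ 1 = fun x => (repNum 𝓑 x : ℝ) := by
  classical
  ext x
  have hcard : repNum 𝓑 x = Nat.card {B : 𝓑 // x ∈ B.1} :=
    Nat.card_congr (Equiv.subtypeSubtypeEquivSubtypeInter _ _).symm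
  simp [mulVec, dotProduct, incMatrix, hcard, Nat.card_eq_fintype_card, Fintype.card_subtype]

namespace IsDesign

lemma one_vecMul_incMatrix [Fintype Pt] (hD : IsDesign 𝓑 k lam) :
    1 ᵥ* incMatrix 𝓑 = fun _ => (k : ℝ) := by
  classical
  ext B
  rw [← hD.block_card B B.2]
  simp [vecMul, dotProduct, incMatrix, Nat.card_eq_fintype_card, Fintype.card_subtype]

lemma incMatrix_mul_transpose [DecidableEq Pt] [Fintype 𝓑] (hD : IsDesign 𝓑 k lam) :
    incMatrix 𝓑 * (incMatrix 𝓑)ᵀ =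
      diagonal (fun x => (repNum 𝓑 x - lam : ℝ)) + (lam : ℝ) • vecMulVec 1 1 := by
  ext x y
  rw [incMatrix_mul_transpose_apply]
  obtain rfl | hxy := eq_or_ne x y
  · simp [repNum]
  · rw [hD.pair_count x y hxy]
    simp [hxy]

lemma sum_repNum [Fintype Pt] (hD : IsDesign 𝓑 k lam) :
    ∑ x, repNum 𝓑 x = Nat.card 𝓑 * k := by
  have := Fintype.ofFinite 𝓑
  have h : 1 ⬝ᵥ (incMatrix 𝓑 *ᵥ 1) = (1 ᵥ* incMatrix 𝓑) ⬝ᵥ 1 := dotProduct_mulVec _ _ _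
  rw [incMatrix_mulVec_one, hD.one_vecMul_incMatrix] at h
  simp only [dotProduct, Pi.one_apply, one_mul, mul_one, Finset.sum_const, Finset.card_univ,
    nsmul_eq_mul, ← Nat.card_eq_fintype_card] at h
  exact_mod_cast h

variable [Finite Pt]

lemma repNum_mul_sub_one (hD : IsDesign 𝓑 k lam) (hk : 1 ≤ k) (x : Pt) :
    repNum 𝓑 x * (k - 1) = lam * (Nat.card Pt - 1) := by
  classical
  have := Fintype.ofFinite Pt
  have := Fintype.ofFinite 𝓑
  have : Nonempty Pt := ⟨x⟩
  have hcol : (incMatrix 𝓑)ᵀ *ᵥ 1 = (k : ℝ) • 1 := by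
    rw [mulVec_transpose, hD.one_vecMul_incMatrix]
    ext; simp
  have h : (incMatrix 𝓑 *ᵥ ((incMatrix 𝓑)ᵀ *ᵥ 1)) x = repNum 𝓑 x - lam + lam * Nat.card Pt := by
    rw [mulVec_mulVec, hD.incMatrix_mul_transpose]
    rw [add_mulVec, smul_mulVec, vecMulVec_mulVec]
    simp [mulVec_diagonal, Nat.card_eq_fintype_card]
  rw [hcol, mulVec_smul, incMatrix_mulVec_one, Pi.smul_apply, smul_eq_mul] at h
  have hv : 1 ≤ Nat.card Pt := Nat.card_pos
  zify [hk, hv]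
  have : (k * repNum 𝓑 x : ℤ) = repNum 𝓑 x - lam + lam * Nat.card Pt := by exact_mod_cast h
  linear_combination this

lemma lam_lt_repNum (hD : IsDesign 𝓑 k lam) (hlam : 0 < lam) (hk : 1 < k)
    (hkv : k < Nat.card Pt) (x : Pt) : lam < repNum 𝓑 x := by
  have h := hD.repNum_mul_sub_one hk.le x
  by_contra! hle
  have : repNum 𝓑 x * (k - 1) ≤ lam * (k - 1) := Nat.mul_le_mul_right _ hle
  have : lam * (k - 1) < lam * (Nat.card Pt - 1) := Nat.mul_lt_mul_of_pos_left (by omega) hlam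
  omega

theorem card_le_card_blocks (hD : IsDesign 𝓑 k lam) (hlam : 0 < lam) (hk : 1 < k)
    (hkv : k < Nat.card Pt) : Nat.card Pt ≤ Nat.card 𝓑 := by
  classical
  have := Fintype.ofFinite Pt
  have := Fintype.ofFinite 𝓑
  have hpos : (incMatrix 𝓑 * (incMatrix 𝓑)ᵀ).PosDef := by
    rw [hD.incMatrix_mul_transpose]
    refine PosDef.add_posSemidef (PosDef.diagonal fun x => ?_) (PosSemidef.smul ?_ (by positivity))
    · have := hD.lam_lt_repNum hlam hk hkv x
      simpa using this
    · simpa using posSemidef_vecMulVec_self_star (1 : Pt → ℝ)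
  calc Nat.card Pt = (incMatrix 𝓑 * (incMatrix 𝓑)ᵀ).rank := by
        rw [rank_of_isUnit _ hpos.isUnit, Nat.card_eq_fintype_card]
    _ ≤ (incMatrix 𝓑).rank := rank_mul_le_left _ _
    _ ≤ Nat.card 𝓑 := by
        rw [Nat.card_eq_fintype_card]
        exact rank_le_card_width _

lemma le_repNum (hD : IsDesign 𝓑 k lam) (hlam : 0 < lam) (hk : 1 < k)
    (hkv : k < Nat.card Pt) (x : Pt) : k ≤ repNum 𝓑 x := by
  have := Fintype.ofFinite Pt
  have hconst (y : Pt) : repNum 𝓑 y = repNum 𝓑 x := by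
    apply Nat.eq_of_mul_eq_mul_right (show 0 < k - 1 by omega)
    rw [hD.repNum_mul_sub_one hk.le, hD.repNum_mul_sub_one hk.le]
  have hvr : Nat.card Pt * repNum 𝓑 x = Nat.card 𝓑 * k := by
    rw [← hD.sum_repNum]
    simp [hconst, Nat.card_eq_fintype_card]
  have hvb : Nat.card Pt * k ≤ Nat.card Pt * repNum 𝓑 x := by
    rw [hvr]
    exact Nat.mul_le_mul_right _ (hD.card_le_card_blocks hlam hk hkv)
  exact Nat.le_of_mul_le_mul_left hvb (by omega)

lemma lam_mul_card_le_repNum_sq (hD : IsDesign 𝓑 k lam) (hlam : 0 < lam) (hk : 1 < k)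
    (hkv : k < Nat.card Pt) (x : Pt) : lam * Nat.card Pt ≤ repNum 𝓑 x ^ 2 := by
  calc lam * Nat.card Pt = lam * (Nat.card Pt - 1) + lam := by
        rw [← Nat.mul_succ]; congr 1; omega
    _ ≤ repNum 𝓑 x * (k - 1) + repNum 𝓑 x := by
        rw [hD.repNum_mul_sub_one hk.le]
        gcongr
        exact (hD.lam_lt_repNum hlam hk hkv x).le
    _ = repNum 𝓑 x * k := by rw [← Nat.mul_succ]; congr 1; omega
    _ ≤ repNum 𝓑 x ^ 2 := by
        rw [sq]
        exact Nat.mul_le_mul_left _ (hD.le_repNum hlam hk hkv x)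

end IsDesign

end Design

lemma map_aeval_of_map_mul_left {R A B : Type*} [CommSemiring R] [Semiring A] [Semiring B]
    [Algebra R A] [Algebra R B] (L : A →ₗ[R] B) (hL : L 1 = 1) {x : A} {y : B}
    (hxy : ∀ a, L (x * a) = y * L a) (P : Polynomial R) :
    L (Polynomial.aeval x P) = Polynomial.aeval y P := by
  have hpow (n : ℕ) : L (x ^ n) = y ^ n := by
    induction n with
    | zero => simp [hL]
    | succ n ih => rw [pow_succ', hxy, ih, pow_succ']
  simp [Polynomial.aeval_eq_sum_range, hpow]

lemma card_le_ncard_mul_card_stabilizer {A β : Type*} [Group A] [MulAction A β] {b : β}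
    {T : Set β} (hT : T.Finite) (h : MulAction.orbit A b ⊆ T) :
    Nat.card A ≤ T.ncard * Nat.card (MulAction.stabilizer A b) := by
  rw [← (MulAction.stabilizer A b).card_mul_index, MulAction.index_stabilizer, mul_comm]
  exact Nat.mul_le_mul_right _ (Set.ncard_le_ncard h hT)

section Extension

variable {G : Type*} [Group G] {X : Subgroup G} [X.Normal]

lemma conjNormal_injective (hX : Subgroup.centralizer (X : Set G) = ⊥) :
    Function.Injective (MulAut.conjNormal : G →* MulAut X) := by
  refine (injective_iff_map_eq_one _).2 fun g hg => ?_
  rw [← Subgroup.mem_bot, ← hX, Subgroup.mem_centralizer_iff]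
  intro x hx
  have hconj := congrArg Subtype.val (DFunLike.congr_fun hg (⟨x, hx⟩ : X))
  rw [MulAut.conjNormal_apply] at hconj
  exact (mul_inv_eq_iff_eq_mul.1 hconj).symm

lemma index_le_of_card_mulAut_le [Finite X] (hX : Subgroup.centralizer (X : Set G) = ⊥) {c : ℕ}
    (hc : Nat.card (MulAut X) ≤ c * Nat.card X) : X.index ≤ c := by
  have hG : Nat.card G ≤ c * Nat.card X :=
    (Nat.card_le_card_of_injective _ (conjNormal_injective hX)).trans hc
  rw [← X.card_mul_index, mul_comm] at hG
  exact Nat.le_of_mul_le_mul_right hG Nat.card_pos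

end Extension

section Action

variable {G : Type*} [Group G] {Pt : Type*} [MulAction G Pt]

lemma card_stabilizer_eq_index_mul [Finite Pt] (X : Subgroup G) [MulAction.IsPretransitive X Pt]
    (α : Pt) : Nat.card (MulAction.stabilizer G α) =
      X.index * Nat.card (MulAction.stabilizer X α) := by
  have : MulAction.IsPretransitive G Pt :=
    MulAction.IsPretransitive.of_smul_eq (fun x : X => (x : G)) rfl
  have : Nonempty Pt := ⟨α⟩
  have hG := (MulAction.stabilizer G α).card_mul_index
  have hX := (MulAction.stabilizer X α).card_mul_index
  rw [MulAction.index_stabilizer_of_transitive] at hG hX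
  apply Nat.eq_of_mul_eq_mul_right (Nat.card_pos (α := Pt))
  rw [hG, ← X.card_mul_index, ← hX]
  ring

lemma FlagTransitive.repNum_dvd_card_stabilizer {𝓑 : Set (Set Pt)} (hflag : FlagTransitive G 𝓑)
    (hacts : ActsOn G 𝓑) {α : Pt} (hα : repNum 𝓑 α ≠ 0) :
    repNum 𝓑 α ∣ Nat.card (MulAction.stabilizer G α) := by
  obtain ⟨⟨B, hB, hαB⟩⟩ := (Nat.card_ne_zero.1 hα).1
  have horbit : {C : Set Pt | C ∈ 𝓑 ∧ α ∈ C} = MulAction.orbit (MulAction.stabilizer G α) B := by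
    ext C
    constructor
    · rintro ⟨hC, hαC⟩
      obtain ⟨g, hgB, hgα⟩ := hflag B hB C hC α hαB α hαC
      exact ⟨⟨g, hgα⟩, hgB⟩
    · rintro ⟨⟨g, hgα⟩, rfl⟩
      exact ⟨hacts g B hB, Set.mem_smul_set.2 ⟨α, hαB, hgα⟩⟩
  rw [repNum, horbit, Nat.card_coe_set_eq, ← MulAction.index_stabilizer]
  exact Subgroup.index_dvd_card _

end Action

open scoped MatrixGroups

namespace PSL2

variable {K : Type*} [Field K]

/-- The projection of `SL(2,K)` onto `PSL(2,K)`. -/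
def proj : SL(2, K) →* PSL2 K := QuotientGroup.mk' _

lemma proj_surjective : Function.Surjective (proj : SL(2, K) →* PSL2 K) :=
  QuotientGroup.mk'_surjective _

lemma proj_eq_proj_iff {g h : SL(2, K)} :
    proj g = proj h ↔ ∃ ε : K, ε ^ 2 = 1 ∧ h.1 = ε • g.1 := by
  have hquot : proj g = proj h ↔ g⁻¹ * h ∈ Subgroup.center SL(2, K) :=
    QuotientGroup.eq
  refine hquot.trans (Matrix.SpecialLinearGroup.mem_center_iff.trans ?_)
  refine exists_congr fun ε => and_congr (by simp) ?_
  have hscalar : scalar (Fin 2) ε = ε • (1 : Matrix (Fin 2) (Fin 2) K) := by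
    simp [smul_one_eq_diagonal]
  have hg : g.1 * g⁻¹.1 = 1 := congrArg Subtype.val (mul_inv_cancel g)
  have hg' : g⁻¹.1 * g.1 = 1 := congrArg Subtype.val (inv_mul_cancel g)
  rw [hscalar, Matrix.SpecialLinearGroup.coe_mul]
  constructor
  · intro hε
    rw [← one_mul h.1, ← hg, mul_assoc, ← hε, mul_smul_comm, mul_one]
  · intro hε
    rw [hε, mul_smul_comm, hg']

/-- The element of `PSL(2,K)` represented by the matrix with rows `(a, b)` and `(c, d)`. -/
def mk (a b c d : K) (h : a * d - b * c = 1) : PSL2 K :=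
  proj ⟨!![a, b; c, d], by rw [det_fin_two_of, h]⟩

lemma proj_eq_mk (g : SL(2, K)) :
    proj g = mk (g.1 0 0) (g.1 0 1) (g.1 1 0) (g.1 1 1) (by rw [← det_fin_two, g.2]) :=
  congrArg proj (Subtype.ext (eta_fin_two _))

lemma exists_eq_mk (g : PSL2 K) : ∃ a b c d h, g = mk a b c d h := by
  obtain ⟨g, rfl⟩ := proj_surjective g
  exact ⟨_, _, _, _, _, proj_eq_mk g⟩

lemma mk_eq_mk_iff {a b c d a' b' c' d' : K} {h : a * d - b * c = 1}
    {h' : a' * d' - b' * c' = 1} : mk a b c d h = mk a' b' c' d' h' ↔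
      ∃ ε : K, ε ^ 2 = 1 ∧ a' = ε * a ∧ b' = ε * b ∧ c' = ε * c ∧ d' = ε * d := by
  refine proj_eq_proj_iff.trans (exists_congr fun ε => and_congr_right fun _ => ?_)
  simp [and_assoc]

lemma one_eq_mk : (1 : PSL2 K) = mk 1 0 0 1 (by simp) := by
  rw [← map_one proj, proj_eq_mk]
  simp

lemma mk_mul_mk {a b c d a' b' c' d' : K} (h : a * d - b * c = 1)
    (h' : a' * d' - b' * c' = 1) : mk a b c d h * mk a' b' c' d' h' =
      mk (a * a' + b * c') (a * b' + b * d') (c * a' + d * c') (c * b' + d * d')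
        (by linear_combination h' + (a' * d' - b' * c') * h) :=
  (map_mul proj _ _).symm.trans
    (congrArg proj (Subtype.ext ((Matrix.SpecialLinearGroup.coe_mul _ _).trans (by simp))))

/-- The upper unitriangular element of `PSL(2,K)` with entry `a`. -/
def upper (a : K) : PSL2 K := mk 1 a 0 1 (by simp)

/-- The diagonal torus of `PSL(2,K)`, parametrized by the upper left entry. -/
def torus : Kˣ →* PSL2 K where
  toFun x := mk x 0 0 ↑x⁻¹ (by simp)
  map_one' := by simp [one_eq_mk]
  map_mul' x y := by
    rw [mk_mul_mk]
    congr 1 <;> simp [mul_comm]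

/-- The Weyl element of `PSL(2,K)`, which interchanges the two coordinate axes. -/
def weyl : PSL2 K := mk 0 1 (-1) 0 (by simp)

lemma torus_apply (x : Kˣ) : torus x = mk (x : K) 0 0 ↑x⁻¹ (by simp) := rfl

lemma upper_mul_upper (a b : K) : upper a * upper b = upper (a + b) := by
  simp only [upper, mk_mul_mk]
  congr 1 <;> ring

lemma upper_zero : upper (0 : K) = 1 := one_eq_mk.symm

lemma upper_pow (a : K) (n : ℕ) : upper a ^ n = upper (n * a) := by
  induction n with
  | zero => simp [upper_zero]
  | succ n ih => rw [pow_succ, ih, upper_mul_upper, Nat.cast_succ, add_one_mul]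

lemma upper_inv (a : K) : (upper a)⁻¹ = upper (-a) :=
  inv_eq_of_mul_eq_one_right (by rw [upper_mul_upper, add_neg_cancel, upper_zero])

lemma upper_injective : Function.Injective (upper : K → PSL2 K) := by
  intro a b hab
  obtain ⟨ε, -, h₁, h₂, -⟩ := mk_eq_mk_iff.1 hab
  rw [h₂, ← mul_one ε, ← h₁, one_mul]

lemma torus_mul_upper (x : Kˣ) (a : K) : torus x * upper a = upper (x ^ 2 * a) * torus x := by
  simp only [torus_apply, upper, mk_mul_mk]
  congr 1 <;> simp
  field_simp

lemma torus_eq_torus_iff {x y : Kˣ} : torus x = torus y ↔ (x : K) ^ 2 = y ^ 2 := by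
  rw [torus_apply, torus_apply, mk_eq_mk_iff]
  refine ⟨?_, fun h => ⟨y / x, ?_, ?_⟩⟩
  · rintro ⟨ε, hε, hy, -⟩
    rw [hy, mul_pow, hε, one_mul]
  · rw [div_pow, ← h, div_self (by simp)]
  · simp only [Units.val_inv_eq_inv_val]
    field_simp
    simp [h]

lemma torus_eq_one_iff {x : Kˣ} : torus x = 1 ↔ (x : K) ^ 2 = 1 := by
  rw [← map_one torus, torus_eq_torus_iff]
  simp

lemma weyl_mul_torus (x : Kˣ) : weyl * torus x = torus x⁻¹ * weyl := by
  simp only [torus_apply, weyl, mk_mul_mk]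
  congr 1 <;> simp

lemma weyl_mul_weyl : weyl * weyl = (1 : PSL2 K) := by
  rw [weyl, mk_mul_mk, one_eq_mk, mk_eq_mk_iff]
  exact ⟨-1, by simp⟩

lemma weyl_mul_upper_one_pow_three : (weyl * upper 1) ^ 3 = (1 : PSL2 K) := by
  rw [weyl, upper, mk_mul_mk, pow_succ, sq, mk_mul_mk, mk_mul_mk, one_eq_mk, mk_eq_mk_iff]
  exact ⟨1, by simp⟩

lemma exists_mk_zero_eq_torus_mul_upper {a b d : K} (h : a * d - b * 0 = 1) :
    ∃ x y, mk a b 0 d h = torus x * upper y := by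
  have had : a * d = 1 := by simpa using h
  refine ⟨⟨a, d, had, by rw [mul_comm, had]⟩, d * b, ?_⟩
  rw [torus_apply, upper, mk_mul_mk]
  congr 1 <;> simp [← mul_assoc, had]

lemma exists_bruhat_decomposition (g : PSL2 K) : (∃ x b, g = torus x * upper b) ∨
    ∃ a x b, g = upper a * weyl * torus x * upper b := by
  obtain ⟨a, b, c, d, h, rfl⟩ := exists_eq_mk g
  obtain rfl | hc := eq_or_ne c 0
  · exact .inl (exists_mk_zero_eq_torus_mul_upper h)
  refine .inr ⟨a / c, Units.mk0 (-c) (neg_ne_zero.2 hc), d / c, ?_⟩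
  simp only [torus_apply, upper, weyl, mk_mul_mk]
  congr 1 <;> simp [hc]
  · field_simp
    linear_combination -h
  · field_simp

lemma exists_eq_torus_mul_upper_of_mul_upper_one {g : PSL2 K} {c : K}
    (hc : g * upper 1 = upper c * g) : ∃ x b, g = torus x * upper b := by
  obtain ⟨a, b, c', d, h, rfl⟩ := exists_eq_mk g
  simp only [upper, mk_mul_mk, mk_eq_mk_iff] at hc
  obtain ⟨ε, -, h₁, -, h₃, h₄⟩ := hc
  obtain rfl : c' = 0 := by grind
  exact exists_mk_zero_eq_torus_mul_upper h

lemma exists_eq_upper_of_commute_upper_one {g : PSL2 K} (hg : Commute g (upper 1)) :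
    ∃ b, g = upper b := by
  obtain ⟨x, b, rfl⟩ := exists_eq_torus_mul_upper_of_mul_upper_one hg.eq
  have h : upper ((x : K) ^ 2) * (torus x * upper b) = upper 1 * (torus x * upper b) := by
    have hconj := torus_mul_upper x 1
    rw [mul_one] at hconj
    rw [← hg.eq, mul_assoc (torus x), upper_mul_upper, add_comm b, ← upper_mul_upper, ← mul_assoc,
      ← mul_assoc, hconj]
  have hx : torus x = 1 := torus_eq_one_iff.2 (upper_injective (mul_right_cancel h))
  exact ⟨b, by rw [hx, one_mul]⟩

lemma exists_eq_torus_of_commute_torus {w : Kˣ} (hw : w ^ 4 ≠ 1) {g : PSL2 K}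
    (hg : Commute g (torus w)) : ∃ x, g = torus x := by
  obtain ⟨a, b, c, d, h, rfl⟩ := exists_eq_mk g
  have hw' : (w : K) ^ 4 ≠ 1 := fun h => hw (Units.ext (by simpa using h))
  have hg' := hg.eq
  simp only [torus_apply, mk_mul_mk, mk_eq_mk_iff] at hg'
  obtain ⟨ε, hε, h₁, h₂, h₃, h₄⟩ := hg'
  have hw₀ : (w : K) * ↑w⁻¹ = 1 := w.mul_inv
  obtain ⟨rfl, rfl⟩ : b = 0 ∧ c = 0 := by grind
  exact ⟨⟨a, d, by simpa using h, by simpa [mul_comm] using h⟩, rfl⟩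

lemma torus_eq_one_of_torus_mul_weyl_mul_upper_one_pow_three {x : Kˣ}
    (hx : (torus x * weyl * upper 1) ^ 3 = 1) : torus x = 1 := by
  rw [torus_apply, weyl, upper, mk_mul_mk, mk_mul_mk, pow_succ, sq, mk_mul_mk, mk_mul_mk,
    one_eq_mk, mk_eq_mk_iff] at hx
  obtain ⟨ε, hε, -, -, h, -⟩ := hx
  have hx₀ : (x : K) * ↑x⁻¹ = 1 := x.mul_inv
  rw [torus_eq_one_iff]
  grind

lemma eq_top_of_generators_mem (h2 : (2 : K) ≠ 0) {H : Subgroup (PSL2 K)} (hweyl : weyl ∈ H)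
    (hupper : upper 1 ∈ H) (htorus : ∀ x, torus x ∈ H) : H = ⊤ := by
  have hsq (x : K) : upper (x ^ 2) ∈ H := by
    obtain rfl | hx := eq_or_ne x 0
    · simp [upper_zero, H.one_mem]
    · have h := torus_mul_upper (Units.mk0 x hx) 1
      rw [mul_one, ← mul_inv_eq_iff_eq_mul] at h
      exact h ▸ H.mul_mem (H.mul_mem (htorus _) hupper) (H.inv_mem (htorus _))
  have hupper' (a : K) : upper a ∈ H := by
    have ha : a = ((a + 1) / 2) ^ 2 + -((a - 1) / 2) ^ 2 := by field_simp; ring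
    rw [ha, ← upper_mul_upper, ← upper_inv]
    exact H.mul_mem (hsq _) (H.inv_mem (hsq _))
  refine eq_top_iff.2 fun g _ => ?_
  obtain ⟨x, b, rfl⟩ | ⟨a, x, b, rfl⟩ := exists_bruhat_decomposition g
  · exact H.mul_mem (htorus x) (hupper' b)
  · exact H.mul_mem (H.mul_mem (H.mul_mem (hupper' a) hweyl) (htorus x)) (hupper' b)

/-- For each point of the projective line (`none` being the point at infinity, fixed by all
`upper a`), an element of `PSL(2,K)` carrying the point at infinity to it. -/
def moveInfty : Option K → PSL2 K
  | none => 1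
  | some x => upper x * weyl

lemma exists_mk_eq_conj_upper {a b c d : K} (h : a * d - b * c = 1) (htr : a + d = 2) :
    ∃ s x, mk a b c d h = moveInfty s * upper x * (moveInfty s)⁻¹ := by
  obtain rfl | hc := eq_or_ne c 0
  · obtain rfl : a = 1 := by grind
    obtain rfl : d = 1 := by simpa using h
    exact ⟨none, b, by simp [moveInfty, upper]⟩
  · refine ⟨some ((a - 1) / c), -c, eq_mul_inv_of_mul_eq ?_⟩
    simp only [moveInfty, upper, weyl, mk_mul_mk]
    congr 1 <;> field_simp <;> grind

section CharP

variable {p : ℕ} [Fact p.Prime] [CharP K p]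

lemma trace_eq_two_of_pow_char_eq_one {A : Matrix (Fin 2) (Fin 2) K} (hA : A ^ p = 1) :
    A.trace = 2 := by
  have hpow : (A - 1) ^ p = 0 := by
    rw [sub_pow_char_of_commute _ (Commute.one_right A), hA, one_pow, sub_self]
  have htr := (Matrix.isNilpotent_trace_of_isNilpotent ⟨p, hpow⟩).eq_zero
  simpa [sub_eq_zero] using htr

lemma exists_eq_conj_upper_of_pow_char_eq_one (hp : Odd p) {g : PSL2 K} (hg : g ^ p = 1) :
    ∃ s x, g = moveInfty s * upper x * (moveInfty s)⁻¹ := by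
  obtain ⟨A, rfl⟩ := proj_surjective g
  obtain ⟨ε, hε, hA⟩ : ∃ ε : K, ε ^ 2 = 1 ∧ A.1 ^ p = ε • 1 := by
    rw [← map_pow, ← map_one proj] at hg
    simpa using proj_eq_proj_iff.1 hg.symm
  have hpow : (ε • A.1) ^ p = 1 := by
    rw [smul_pow, hA, smul_smul, ← pow_succ]
    obtain ⟨m, hm⟩ := hp.add_one
    rw [hm, ← two_mul, pow_mul, hε, one_pow, one_smul]
  have hdet : (ε • A.1).det = 1 := by rw [det_smul, Fintype.card_fin, hε, A.2, one_mul]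
  obtain ⟨B, hB⟩ : ∃ B : SL(2, K), B.1 = ε • A.1 := ⟨⟨_, hdet⟩, rfl⟩
  rw [proj_eq_proj_iff.2 ⟨ε, hε, hB⟩, proj_eq_mk]
  apply exists_mk_eq_conj_upper
  rw [← trace_fin_two]
  exact trace_eq_two_of_pow_char_eq_one (hB ▸ hpow)

end CharP

lemma ncard_pow_char_eq_one_le [Finite K] {p : ℕ} [Fact p.Prime] [CharP K p] (hp : Odd p) :
    {g : PSL2 K | g ^ p = 1 ∧ g ≠ 1}.ncard ≤ Nat.card K ^ 2 - 1 := by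
  have hsub : {g : PSL2 K | g ^ p = 1 ∧ g ≠ 1} ⊆
      Set.range fun s : Option K × Kˣ => moveInfty s.1 * upper (s.2 : K) * (moveInfty s.1)⁻¹ := by
    rintro g ⟨hg, hg₁⟩
    obtain ⟨s, x, rfl⟩ := exists_eq_conj_upper_of_pow_char_eq_one hp hg
    have hx : x ≠ 0 := by
      rintro rfl
      simp [upper_zero] at hg₁
    exact ⟨(s, Units.mk0 x hx), rfl⟩
  calc _ ≤ _ := Set.ncard_le_ncard hsub
    _ ≤ Nat.card (Option K × Kˣ) := Finite.card_range_le _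
    _ = Nat.card K ^ 2 - 1 := by
      rw [Nat.card_prod, Finite.card_option, Nat.card_units, ← Nat.sq_sub_sq _ 1, one_pow]

section Card

lemma card_specialLinearGroup [Finite K] :
    Nat.card SL(2, K) = Nat.card K * (Nat.card K ^ 2 - 1) := by
  have := Fintype.ofFinite K
  have hker : Nat.card SL(2, K) =
      Nat.card (GeneralLinearGroup.det : GL (Fin 2) K →* Kˣ).ker := by
    refine Nat.card_congr ((Equiv.ofInjective _ Matrix.SpecialLinearGroup.toGL_injective).trans
      (Equiv.setCongr ?_))
    exact Matrix.SpecialLinearGroup.range_toGL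
  have hindex : (GeneralLinearGroup.det : GL (Fin 2) K →* Kˣ).ker.index = Nat.card K - 1 := by
    rw [Subgroup.index_ker, MonoidHom.range_eq_top.2 GeneralLinearGroup.det_surjective,
      Subgroup.card_top, Nat.card_units]
  have hGL := (GeneralLinearGroup.det : GL (Fin 2) K →* Kˣ).ker.card_mul_index
  rw [← hker, hindex, card_GL_field, ← Nat.card_eq_fintype_card] at hGL
  have hq : 0 < Nat.card K - 1 := Nat.sub_pos_of_lt Finite.one_lt_card
  apply Nat.eq_of_mul_eq_mul_right hq
  rw [hGL, Fin.prod_univ_two]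
  simp only [Fin.val_zero, Fin.val_one, pow_zero, pow_one]
  rw [mul_right_comm, Nat.mul_sub_one (Nat.card K), ← sq, mul_comm]

lemma card_center_specialLinearGroup (h2 : (2 : K) ≠ 0) :
    Nat.card (Subgroup.center SL(2, K)) = 2 := by
  have hchar : ringChar K ≠ 2 := fun h => h2 (by
    simpa [h] using ringChar.Nat.cast_ringChar (R := K))
  rw [Nat.card_congr Matrix.SpecialLinearGroup.center_equiv_rootsOfUnity.toEquiv]
  exact (IsPrimitiveRoot.neg_one (ringChar K) hchar).card_rootsOfUnity

lemma two_mul_card [Finite K] (h2 : (2 : K) ≠ 0) :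
    2 * Nat.card (PSL2 K) = Nat.card K * (Nat.card K ^ 2 - 1) := by
  rw [← card_specialLinearGroup, Subgroup.card_eq_card_quotient_mul_card_subgroup
    (Subgroup.center SL(2, K)), card_center_specialLinearGroup h2, mul_comm]

end Card

section Automorphisms

variable {φ : PSL2 K →* PSL2 K}

lemma exists_addMonoidHom_map_upper (hφ : φ (upper 1) = upper 1) :
    ∃ ψ : K →+ K, ψ 1 = 1 ∧ ∀ a, φ (upper a) = upper (ψ a) := by
  have hcomm (a : K) : Commute (φ (upper a)) (upper 1) := by
    rw [← hφ, Commute, SemiconjBy, ← map_mul, ← map_mul, upper_mul_upper, upper_mul_upper,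
      add_comm]
  choose ψ hψ using fun a => exists_eq_upper_of_commute_upper_one (hcomm a)
  refine ⟨AddMonoidHom.mk' ψ fun a b => upper_injective ?_, upper_injective ?_, hψ⟩
  · rw [← hψ, ← upper_mul_upper, map_mul, hψ, hψ, upper_mul_upper]
  · rw [AddMonoidHom.mk'_apply, ← hψ, hφ]

lemma exists_map_torus {ψ : K →+ K} (hψ₁ : ψ 1 = 1) (hψ : ∀ a, φ (upper a) = upper (ψ a))
    (w : Kˣ) : ∃ (x : Kˣ) (b : K), φ (torus w) = torus x * upper b ∧
      ∀ a, ψ (w ^ 2 * a) = x ^ 2 * ψ a := by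
  have hconj (a : K) : φ (torus w) * upper (ψ a) = upper (ψ (w ^ 2 * a)) * φ (torus w) := by
    rw [← hψ, ← hψ, ← map_mul, ← map_mul, torus_mul_upper]
  have hone := hconj 1
  rw [hψ₁] at hone
  obtain ⟨x, b, hxb⟩ := exists_eq_torus_mul_upper_of_mul_upper_one hone
  refine ⟨x, b, hxb, fun a => upper_injective (mul_right_cancel (b := φ (torus w)) ?_)⟩
  rw [← hconj, hxb, mul_assoc, upper_mul_upper, add_comm, ← upper_mul_upper, ← mul_assoc,
    torus_mul_upper, mul_assoc]

lemma exists_map_torus_of_aeval_eq_zero {p : ℕ} [Algebra (ZMod p) K]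
    (hφ : φ (upper 1) = upper 1) {w : Kˣ} {P : Polynomial (ZMod p)}
    (hP : Polynomial.aeval ((w : K) ^ 2) P = 0) : ∃ (x : Kˣ) (b : K),
      Polynomial.aeval ((x : K) ^ 2) P = 0 ∧ φ (torus w) = torus x * upper b := by
  obtain ⟨ψ, hψ₁, hψ⟩ := exists_addMonoidHom_map_upper hφ
  obtain ⟨x, b, hxb, hmul⟩ := exists_map_torus hψ₁ hψ w
  refine ⟨x, b, ?_, hxb⟩
  rw [← map_aeval_of_map_mul_left (ψ.toZModLinearMap p) hψ₁ hmul, hP, map_zero]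

lemma eq_id_of_map_upper_one_of_map_torus (h2 : (2 : K) ≠ 0) {w : Kˣ}
    (hw : ∀ x, x ∈ Subgroup.zpowers w) (hw₄ : w ^ 4 ≠ 1) (hupper : φ (upper 1) = upper 1)
    (htorus : φ (torus w) = torus w) : φ = MonoidHom.id _ := by
  have htorus' (x : Kˣ) : φ (torus x) = torus x := by
    obtain ⟨n, rfl⟩ := hw x
    simp [htorus]
  have hweyl : φ weyl = weyl := by
    have hcomm : Commute (weyl * φ weyl) (torus w) := by
      have h : φ weyl * torus w = torus w⁻¹ * φ weyl := by
        rw [← htorus' w, ← htorus' w⁻¹, ← map_mul, ← map_mul, weyl_mul_torus]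
      rw [Commute, SemiconjBy, mul_assoc, h, ← mul_assoc, weyl_mul_torus, inv_inv, mul_assoc]
    obtain ⟨x, hx⟩ := exists_eq_torus_of_commute_torus hw₄ hcomm
    have hφ : φ weyl = torus x⁻¹ * weyl := by
      rw [← weyl_mul_torus, ← hx, ← mul_assoc, weyl_mul_weyl, one_mul]
    have hpow : (torus x⁻¹ * weyl * upper 1) ^ 3 = 1 := by
      rw [← hφ, ← hupper, ← map_mul, ← map_pow, weyl_mul_upper_one_pow_three, map_one]
    rw [hφ, torus_eq_one_of_torus_mul_weyl_mul_upper_one_pow_three hpow, one_mul]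
  have htop : φ.eqLocus (MonoidHom.id _) = ⊤ := eq_top_of_generators_mem h2 hweyl hupper htorus'
  exact MonoidHom.eq_of_eqOn_top fun g hg => htop.ge hg

lemma ncard_torus_mul_upper_le [Finite K] (R : Set K) :
    {g : PSL2 K | ∃ (x : Kˣ) (b : K), (x : K) ^ 2 ∈ R ∧ g = torus x * upper b}.ncard ≤
      R.ncard * Nat.card K := by
  let root : K → Kˣ := Function.invFun fun x : Kˣ => (x : K) ^ 2
  have hroot (x : Kˣ) : torus (root (x ^ 2)) = torus x :=
    torus_eq_torus_iff.2 (Function.invFun_eq (f := fun x : Kˣ => (x : K) ^ 2) ⟨x, rfl⟩)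
  calc _ ≤ ((fun s : K × K => torus (root s.1) * upper s.2) '' R ×ˢ Set.univ).ncard := by
        refine Set.ncard_le_ncard ?_
        rintro _ ⟨x, b, hx, rfl⟩
        exact ⟨(x ^ 2, b), ⟨hx, trivial⟩, by simp only [hroot]⟩
    _ ≤ (R ×ˢ (Set.univ : Set K)).ncard := Set.ncard_image_le
    _ = R.ncard * Nat.card K := by rw [Set.ncard_prod, Set.ncard_univ]

variable [Finite K] {p : ℕ} [Fact p.Prime]

lemma card_stabilizer_upper_one_le [Algebra (ZMod p) K] (h2 : (2 : K) ≠ 0)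
    (h5 : 5 < Nat.card K) : Nat.card (MulAction.stabilizer (MulAut (PSL2 K)) (upper 1 : PSL2 K)) ≤
      Module.finrank (ZMod p) K * Nat.card K := by
  obtain ⟨w, hw⟩ := IsCyclic.exists_generator (α := Kˣ)
  have hw₄ : w ^ 4 ≠ 1 := by
    intro h
    have hdvd := orderOf_dvd_of_pow_eq_one h
    rw [orderOf_eq_card_of_forall_mem_zpowers hw, Nat.card_units] at hdvd
    have := Nat.le_of_dvd (by norm_num) hdvd
    omega
  let P := minpoly (ZMod p) ((w : K) ^ 2)
  have hP₀ : P ≠ 0 := minpoly.ne_zero (Algebra.IsIntegral.isIntegral _)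
  have hroots : (P.rootSet K).ncard ≤ Module.finrank (ZMod p) K :=
    (P.ncard_rootSet_le K).trans (minpoly.natDegree_le _)
  set A := MulAction.stabilizer (MulAut (PSL2 K)) (upper 1 : PSL2 K)
  have horbit : MulAction.orbit A (torus w) ⊆
      {g | ∃ (x : Kˣ) (b : K), (x : K) ^ 2 ∈ P.rootSet K ∧ g = torus x * upper b} := by
    rintro _ ⟨φ, rfl⟩
    obtain ⟨x, b, hx, h⟩ := exists_map_torus_of_aeval_eq_zero (φ := φ.1.toMonoidHom) φ.2
      (minpoly.aeval (ZMod p) ((w : K) ^ 2))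
    exact ⟨x, b, (Polynomial.mem_rootSet_of_ne hP₀).2 hx, h⟩
  have hstab : Nat.card (MulAction.stabilizer A (torus w)) ≤ 1 := by
    have : Subsingleton (MulAction.stabilizer A (torus w)) := by
      have hone (φ : MulAction.stabilizer A (torus w)) : φ.1.1.toMonoidHom = MonoidHom.id _ :=
        eq_id_of_map_upper_one_of_map_torus h2 hw hw₄ φ.1.2 φ.2
      exact ⟨fun φ χ => Subtype.ext (Subtype.ext (MulEquiv.toMonoidHom_injective
        ((hone φ).trans (hone χ).symm)))⟩
    exact Finite.card_le_one_iff_subsingleton.2 this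
  calc Nat.card A ≤ _ := card_le_ncard_mul_card_stabilizer (Set.toFinite _) horbit
    _ ≤ (Module.finrank (ZMod p) K * Nat.card K) * 1 := by
      gcongr
      exact (ncard_torus_mul_upper_le _).trans (Nat.mul_le_mul_right _ hroots)
    _ = Module.finrank (ZMod p) K * Nat.card K := mul_one _

theorem card_mulAut_le [Algebra (ZMod p) K] (hp : Odd p) (h5 : 5 < Nat.card K) :
    Nat.card (MulAut (PSL2 K)) ≤ 2 * Module.finrank (ZMod p) K * Nat.card (PSL2 K) := by
  have : CharP K p := (Algebra.charP_iff (ZMod p) K p).1 inferInstance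
  have h2 : (2 : K) ≠ 0 := Ring.two_ne_zero (by
    rw [ringChar.eq K p]
    rintro rfl
    exact absurd hp (by decide))
  have horbit : MulAction.orbit (MulAut (PSL2 K)) (upper 1 : PSL2 K) ⊆
      {g | g ^ p = 1 ∧ g ≠ 1} := by
    rintro _ ⟨φ, rfl⟩
    have hpow : (upper 1 : PSL2 K) ^ p = 1 := by
      rw [upper_pow, mul_one, CharP.cast_eq_zero, upper_zero]
    have hone : (upper 1 : PSL2 K) ≠ 1 := by
      rw [← upper_zero]
      exact upper_injective.ne one_ne_zero
    exact ⟨(map_pow φ _ p).symm.trans (by rw [hpow, map_one]),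
      (map_ne_one_iff φ φ.injective).2 hone⟩
  calc Nat.card (MulAut (PSL2 K)) ≤ _ :=
        card_le_ncard_mul_card_stabilizer (Set.toFinite _) horbit
    _ ≤ (Nat.card K ^ 2 - 1) * (Module.finrank (ZMod p) K * Nat.card K) :=
        Nat.mul_le_mul (ncard_pow_char_eq_one_le hp) (card_stabilizer_upper_one_le h2 h5)
    _ = 2 * Module.finrank (ZMod p) K * Nat.card (PSL2 K) := by
        rw [mul_right_comm, two_mul_card h2]
        ring

end Automorphisms

end PSL2

/-- The degree of `PSL(2,q₀ᵗ)` acting on the cosets of its subfield subgroup `PSL(2,q₀)`, which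
for odd `q₀` is `q₀ᵗ⁻¹ (q₀²ᵗ - 1) / (q₀² - 1)`; the geometric sum avoids the division. -/
def subfieldDegree (q₀ t : ℕ) : ℕ := q₀ ^ (t - 1) * ∑ i ∈ Finset.range t, (q₀ ^ 2) ^ i

section SubfieldDegree

variable {q₀ t : ℕ}

lemma subfieldDegree_mul (ht : t ≠ 0) (hq₀ : q₀ ≠ 0) :
    subfieldDegree q₀ t * (q₀ * (q₀ ^ 2 - 1)) = q₀ ^ t * ((q₀ ^ t) ^ 2 - 1) := by
  have hgeom : (∑ i ∈ Finset.range t, (q₀ ^ 2) ^ i) * (q₀ ^ 2 - 1) = (q₀ ^ 2) ^ t - 1 := by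
    have hpos : 1 ≤ q₀ ^ 2 := Nat.one_le_pow _ _ (by omega)
    zify [hpos, Nat.one_le_pow t _ hpos]
    exact geom_sum_mul _ _
  calc subfieldDegree q₀ t * (q₀ * (q₀ ^ 2 - 1))
      = q₀ ^ (t - 1) * q₀ * ((∑ i ∈ Finset.range t, (q₀ ^ 2) ^ i) * (q₀ ^ 2 - 1)) := by
        rw [subfieldDegree]; ring
    _ = q₀ ^ t * ((q₀ ^ t) ^ 2 - 1) := by rw [hgeom, pow_sub_one_mul ht, pow_right_comm]

lemma subfieldDegree_modEq (ht : Odd t) (hq₀ : q₀ ≠ 0) :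
    subfieldDegree q₀ t ≡ t [MOD q₀ ^ 2 - 1] := by
  have hsq : (q₀ : ZMod (q₀ ^ 2 - 1)) ^ 2 = 1 := by
    have h := ZMod.natCast_self (q₀ ^ 2 - 1)
    rw [Nat.cast_sub (Nat.one_le_pow _ _ (by omega)), sub_eq_zero] at h
    exact_mod_cast h
  obtain ⟨m, rfl⟩ := ht
  rw [← ZMod.natCast_eq_natCast_iff]
  simp [subfieldDegree, hsq, pow_mul]

lemma pow_le_subfieldDegree (ht : t ≠ 0) : q₀ ^ (3 * (t - 1)) ≤ subfieldDegree q₀ t := by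
  calc q₀ ^ (3 * (t - 1)) = q₀ ^ (t - 1) * (q₀ ^ 2) ^ (t - 1) := by
        rw [← pow_mul, ← pow_add]; congr 1; ring
    _ ≤ subfieldDegree q₀ t := by
        refine Nat.mul_le_mul_left _ ?_
        exact Finset.single_le_sum_of_canonicallyOrdered (f := fun i => (q₀ ^ 2) ^ i)
          (Finset.mem_range.2 (by omega))

lemma gcd_subfieldDegree_sub_one_dvd (ht : Odd t) (ht₁ : 1 < t) (hq₀ : q₀ ≠ 0) :
    (subfieldDegree q₀ t - 1).gcd (q₀ * (q₀ ^ 2 - 1)) ∣ t - 1 := by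
  set v := subfieldDegree q₀ t
  have hv₁ : 1 ≤ v :=
    (Nat.one_le_pow _ _ (by omega)).trans (pow_le_subfieldDegree (by omega))
  have hcop : Nat.Coprime (v - 1) q₀ := by
    have hdvd : q₀ ∣ v := (dvd_pow_self q₀ (by omega)).mul_right _
    exact Nat.Coprime.coprime_dvd_right hdvd ((Nat.coprime_self_sub_left hv₁).2 (by simp))
  rw [hcop.symm.gcd_mul_left_cancel_right]
  set g := (v - 1).gcd (q₀ ^ 2 - 1)
  have hv₁g : 1 ≡ v [MOD g] := (Nat.modEq_iff_dvd' hv₁).2 (Nat.gcd_dvd_left _ _)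
  have hvt : v ≡ t [MOD g] := (subfieldDegree_modEq ht hq₀).of_dvd (Nat.gcd_dvd_right _ _)
  exact (Nat.modEq_iff_dvd' ht₁.le).1 (hv₁g.trans hvt)

end SubfieldDegree

lemma mul_pow_four_lt_pow {n : ℕ} (hn : 2 ≤ n) : 45 * n ^ 4 < 27 ^ n := by
  induction n, hn using Nat.le_induction with
  | base => norm_num
  | succ n hn ih =>
    have hstep : (n + 1) ^ 4 ≤ 27 * n ^ 4 := by
      calc (n + 1) ^ 4 ≤ (2 * n) ^ 4 := by gcongr; omega
        _ ≤ 27 * n ^ 4 := by rw [mul_pow]; gcongr; norm_num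
    rw [pow_succ 27]
    omega

lemma mul_sq_lt_subfieldDegree {p f t : ℕ} (hp : 3 ≤ p) (hf : f ≠ 0) (ht : 3 ≤ t) :
    20 * (f * t * (t - 1)) ^ 2 < subfieldDegree (p ^ f) t := by
  obtain ⟨s, rfl⟩ : ∃ s, t = s + 1 := ⟨t - 1, by omega⟩
  rw [Nat.add_sub_cancel]
  have hs : 2 ≤ s := by omega
  have hsn : s ≤ f * s := Nat.le_mul_of_pos_left s (Nat.pos_of_ne_zero hf)
  have hlin : 2 * (f * (s + 1)) ≤ 3 * (f * s) := by
    have : f * 2 ≤ f * s := Nat.mul_le_mul_left f hs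
    linarith
  have hquad : 2 * (f * (s + 1) * s) ≤ 3 * (f * s) ^ 2 := by
    calc 2 * (f * (s + 1) * s) = 2 * (f * (s + 1)) * s := by ring
      _ ≤ 3 * (f * s) * (f * s) := Nat.mul_le_mul hlin hsn
      _ = 3 * (f * s) ^ 2 := by ring
  calc 20 * (f * (s + 1) * s) ^ 2 = 5 * (2 * (f * (s + 1) * s)) ^ 2 := by ring
    _ ≤ 5 * (3 * (f * s) ^ 2) ^ 2 := by gcongr
    _ = 45 * (f * s) ^ 4 := by ring
    _ < 27 ^ (f * s) := mul_pow_four_lt_pow (hs.trans hsn)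
    _ = (3 ^ f) ^ (3 * s) := by
        rw [show 27 = 3 ^ 3 from rfl, ← pow_mul, ← pow_mul]; congr 1; ring
    _ ≤ (p ^ f) ^ (3 * s) := by gcongr
    _ ≤ subfieldDegree (p ^ f) (s + 1) := pow_le_subfieldDegree s.succ_ne_zero

lemma exists_eq_pow_of_pow_eq_prime_pow {p q f t : ℕ} (hp : p.Prime) (ht : t ≠ 0)
    (h : q ^ t = p ^ f) : ∃ e, q = p ^ e ∧ f = e * t := by
  obtain ⟨e, -, rfl⟩ := (Nat.dvd_prime_pow hp).1 (h ▸ dvd_pow_self q ht)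
  exact ⟨e, rfl, (Nat.pow_right_injective hp.two_le ((pow_mul p e t).trans h)).symm⟩

section Main

variable {Pt : Type*} {G : Type*} [Group G] [MulAction G Pt] {X : Subgroup G}
  {𝓑 : Set (Set Pt)} {k lam : ℕ} {F F₀ : Type*} [Field F] [Finite F] [Field F₀] [Finite F₀]

lemma IsDesign.card_le_lam_mul_sq [Finite Pt] [MulAction.IsPretransitive X Pt]
    (hD : IsDesign 𝓑 k lam) (hlam : 0 < lam) (hk : 1 < k) (hkv : k < Nat.card Pt)
    (hacts : ActsOn G 𝓑) (hflag : FlagTransitive G 𝓑) (hindex : X.index ≠ 0) {α : Pt}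
    {n : ℕ} (hn : n ≠ 0)
    (hgcd : (Nat.card Pt - 1).gcd (Nat.card (MulAction.stabilizer X α)) ∣ n) :
    Nat.card Pt ≤ lam * (X.index * n) ^ 2 := by
  have hr : 0 < repNum 𝓑 α := (Nat.zero_le _).trans_lt (hD.lam_lt_repNum hlam hk hkv α)
  have hdvd_stabilizer := hflag.repNum_dvd_card_stabilizer hacts hr.ne'
  rw [card_stabilizer_eq_index_mul X] at hdvd_stabilizer
  have hdvd_sub_one : repNum 𝓑 α ∣ lam * (Nat.card Pt - 1) :=
    Dvd.intro _ (hD.repNum_mul_sub_one hk.le α)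
  have hdvd : repNum 𝓑 α ∣ lam * X.index * n := by
    refine (Nat.dvd_gcd (hdvd_sub_one.mul_right X.index)
      (hdvd_stabilizer.mul_left lam)).trans ?_
    rw [mul_right_comm, ← mul_assoc, Nat.gcd_mul_left]
    exact Nat.mul_dvd_mul_left _ hgcd
  have hle : repNum 𝓑 α ≤ lam * X.index * n := Nat.le_of_dvd (by positivity) hdvd
  refine Nat.le_of_mul_le_mul_left ?_ hlam
  calc lam * Nat.card Pt ≤ repNum 𝓑 α ^ 2 := hD.lam_mul_card_le_repNum_sq hlam hk hkv α
    _ ≤ (lam * X.index * n) ^ 2 := by gcongr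
    _ = lam * (lam * (X.index * n) ^ 2) := by ring

lemma card_eq_subfieldDegree [MulAction.IsPretransitive X Pt] (hXiso : Nonempty (X ≃* PSL2 F))
    {t : ℕ} (ht : t ≠ 0) (hcard : Nat.card F = Nat.card F₀ ^ t) (h2 : (2 : F) ≠ 0)
    (h2₀ : (2 : F₀) ≠ 0) {α : Pt}
    (hα : Nat.card (MulAction.stabilizer X α) = Nat.card (PSL2 F₀)) :
    Nat.card Pt = subfieldDegree (Nat.card F₀) t := by
  obtain ⟨e⟩ := hXiso
  have : Nonempty Pt := ⟨α⟩
  have hX : Nat.card (PSL2 F₀) * Nat.card Pt = Nat.card (PSL2 F) := by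
    rw [← hα, ← MulAction.index_stabilizer_of_transitive X α, Subgroup.card_mul_index,
      Nat.card_congr e.toEquiv]
  have hpos : 0 < 2 * Nat.card (PSL2 F₀) := Nat.mul_pos two_pos Nat.card_pos
  apply Nat.eq_of_mul_eq_mul_right hpos
  rw [PSL2.two_mul_card h2₀, subfieldDegree_mul ht Nat.card_pos.ne', ← hcard,
    ← PSL2.two_mul_card h2, ← PSL2.two_mul_card h2₀, ← hX]
  ring

lemma finite_of_centralizer_eq_bot [Finite X] [X.Normal]
    (hXcent : Subgroup.centralizer (X : Set G) = ⊥) : Finite G :=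
  have : Finite (MulAut X) := Finite.of_injective _ MulEquiv.toEquiv_injective
  .of_injective _ (conjNormal_injective hXcent)

lemma index_le_two_mul_finrank [X.Normal] (hXiso : Nonempty (X ≃* PSL2 F))
    (hXcent : Subgroup.centralizer (X : Set G) = ⊥) {p : ℕ} [Fact p.Prime] [Algebra (ZMod p) F]
    (hp : Odd p) (h5 : 5 < Nat.card F) : X.index ≤ 2 * Module.finrank (ZMod p) F := by
  obtain ⟨e⟩ := hXiso
  have : Finite X := Finite.of_equiv _ e.symm.toEquiv
  refine index_le_of_card_mulAut_le hXcent ?_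
  rw [Nat.card_congr (MulAut.congr e).toEquiv, Nat.card_congr e.toEquiv]
  exact PSL2.card_mulAut_le hp h5

lemma two_ne_zero_of_odd_card (h : Odd (Nat.card F)) : (2 : F) ≠ 0 := by
  have := Fintype.ofFinite F
  rw [Nat.card_eq_fintype_card] at h
  refine Ring.two_ne_zero fun h2 => ?_
  exact Nat.not_even_iff_odd.2 h (Nat.even_iff.2 (FiniteField.even_card_of_char_two h2))

lemma five_mul_sq_index_lt_subfieldDegree [X.Normal] (hXiso : Nonempty (X ≃* PSL2 F))
    (hXcent : Subgroup.centralizer (X : Set G) = ⊥) {t : ℕ} (ht : 3 ≤ t)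
    (hcard : Nat.card F = Nat.card F₀ ^ t) (hodd : Odd (Nat.card F)) :
    5 * (X.index * (t - 1)) ^ 2 < subfieldDegree (Nat.card F₀) t := by
  obtain ⟨p, _⟩ := CharP.exists F
  have : Fact p.Prime := ⟨CharP.char_is_prime F p⟩
  let := ZMod.algebra F p
  have hFp : Nat.card F = p ^ Module.finrank (ZMod p) F := by
    rw [Module.natCard_eq_pow_finrank (K := ZMod p) (V := F), Nat.card_zmod]
  obtain ⟨f, hF₀, hf⟩ :=
    exists_eq_pow_of_pow_eq_prime_pow (Fact.out : p.Prime) (by omega) (hcard.symm.trans hFp)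
  have hf₀ : f ≠ 0 := by
    rintro rfl
    exact (Finite.one_lt_card (α := F₀)).ne' hF₀
  have hp : Odd p := (Nat.odd_pow_iff Module.finrank_pos.ne').1 (hFp ▸ hodd)
  have hp₃ : 3 ≤ p := (Fact.out : p.Prime).odd_iff.1 hp
  have h5 : 5 < Nat.card F := by
    calc 5 < 3 ^ 3 := by norm_num
      _ ≤ p ^ (f * t) :=
        pow_le_pow hp₃ (by omega) (ht.trans (Nat.le_mul_of_pos_left t (Nat.pos_of_ne_zero hf₀)))
      _ = Nat.card F := by rw [hFp, hf]
  have hindex : X.index ≤ 2 * (f * t) := hf ▸ index_le_two_mul_finrank hXiso hXcent hp h5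
  calc 5 * (X.index * (t - 1)) ^ 2 ≤ 5 * (2 * (f * t) * (t - 1)) ^ 2 := by gcongr
    _ = 20 * (f * t * (t - 1)) ^ 2 := by ring
    _ < subfieldDegree (p ^ f) t := mul_sq_lt_subfieldDegree hp₃ hf₀ ht
    _ = subfieldDegree (Nat.card F₀) t := by rw [hF₀]

end Main

end FT

theorem stmt_10_general {Pt : Type*} [Finite Pt] {G : Type*} [Group G] [MulAction G Pt]
    {𝓑 : Set (Set Pt)} {k lam : ℕ} (hD : IsDesign 𝓑 k lam) (hlam : 0 < lam) (hlam₅ : lam ≤ 5)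
    (hk : 1 < k) (hkv : k < Nat.card Pt) (hacts : ActsOn G 𝓑) (hflag : FlagTransitive G 𝓑)
    {F F₀ : Type*} [Field F] [Finite F] [Field F₀] [Finite F₀] {X : Subgroup G} [X.Normal]
    (hXiso : Nonempty (X ≃* PSL2 F)) (hXcent : Subgroup.centralizer (X : Set G) = ⊥)
    [MulAction.IsPretransitive X Pt] (α : Pt) {t : ℕ} (ht : Odd t) (ht₁ : t ≠ 1)
    (hcard : Nat.card F = Nat.card F₀ ^ t) (hodd : Odd (Nat.card F)) :
    Nat.card (MulAction.stabilizer X α) ≠ Nat.card (PSL2 F₀) := by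
  intro hα
  have ht₃ : 3 ≤ t := by obtain ⟨m, rfl⟩ := ht; omega
  have hodd₀ : Odd (Nat.card F₀) := (Nat.odd_pow_iff (by omega)).1 (hcard ▸ hodd)
  have h2₀ := two_ne_zero_of_odd_card hodd₀
  have hv : Nat.card Pt = subfieldDegree (Nat.card F₀) t :=
    card_eq_subfieldDegree hXiso (by omega) hcard (two_ne_zero_of_odd_card hodd) h2₀ hα
  have hgcd : (Nat.card Pt - 1).gcd (Nat.card (MulAction.stabilizer X α)) ∣ t - 1 := by
    rw [hα, hv]
    refine (Nat.gcd_dvd_gcd_of_dvd_right _ (Dvd.intro_left 2 (PSL2.two_mul_card h2₀))).trans ?_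
    exact gcd_subfieldDegree_sub_one_dvd ht (by omega) Nat.card_pos.ne'
  have : Finite X := Finite.of_equiv _ hXiso.some.symm.toEquiv
  have : Finite G := finite_of_centralizer_eq_bot hXcent
  have hupper : Nat.card Pt ≤ lam * (X.index * (t - 1)) ^ 2 :=
    hD.card_le_lam_mul_sq hlam hk hkv hacts hflag X.index_ne_zero_of_finite (by omega) hgcd
  have hlower : 5 * (X.index * (t - 1)) ^ 2 < Nat.card Pt :=
    hv ▸ five_mul_sq_index_lt_subfieldDegree hXiso hXcent ht₃ hcard hodd
  exact (hupper.trans (Nat.mul_le_mul_right _ hlam₅)).not_gt hlower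

/-- In the setting of a non-trivial, non-symmetric flag-transitive,
point-primitive `2-(v,k,3)` design with `3 ∣ r`, almost simple automorphism group `G` with
socle `X ≅ PSL(2,q)` acting point-primitively with maximal point stabilizer `X_α`:
the stabilizer `X_α` is not isomorphic to a subfield subgroup `PSL(2,q₀)` with `q = q₀ᵗ`
odd and `t` an odd prime. -/
theorem stmt_10
    (q : ℕ) (hq4 : 4 ≤ q)
    (F : Type) [Field F] [Fintype F] (hF : Fintype.card F = q)
    {Pt : Type*} [Fintype Pt] {G : Type*} [Group G] [MulAction G Pt] [FaithfulSMul G Pt]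
    -- `D = (Pt, 𝓑)` is a non-trivial, non-symmetric `2-(v,k,3)` design …
    (𝓑 : Set (Set Pt)) (v k : ℕ) (hv : Nat.card Pt = v)
    (hD : IsDesign 𝓑 k 3) (hnt : 2 < k ∧ k < v - 1)
    (hnonsym : Nat.card 𝓑 ≠ v)
    -- … whose replication number `r` is divisible by 3, …
    (r : ℕ) (hr : ∀ x : Pt, repNum 𝓑 x = r) (h3r : 3 ∣ r)
    -- … admitting the flag-transitive, point-primitive automorphism group `G`, …
    (hacts : ActsOn G 𝓑) (hflag : FlagTransitive G 𝓑)
    (hprim : PointPrimitive G Pt)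
    -- … where `G` is almost simple with socle `X ≅ PSL(2,q)` (so `PSL(2,q) ⊴ G ≤ PΓL(2,q)`):
    (X : Subgroup G) (hXnormal : X.Normal)
    (hXiso : Nonempty (X ≃* PSL2 F))
    (hXcent : Subgroup.centralizer (X : Set G) = ⊥)
    -- `X` acts point-primitively on `D`, with maximal point stabilizer `X_α`:
    (hXprim : PointPrimitive X Pt)
    (α : Pt) (hmax : IsCoatom (MulAction.stabilizer X α))
    :
    ∀ (q₀ t : ℕ) (F₀ : Type) [Field F₀] [Fintype F₀], Fintype.card F₀ = q₀ →
      t.Prime → Odd t → q = q₀ ^ t → Odd q →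
      IsEmpty ((MulAction.stabilizer X α) ≃* PSL2 F₀) := by
  rintro _ t F₀ _ _ rfl ht htodd hqt hqodd
  subst hF hv
  have := hXprim.1
  rw [← Nat.card_eq_fintype_card] at hqodd
  simp only [← Nat.card_eq_fintype_card] at hqt
  exact ⟨fun e => stmt_10_general hD three_pos (by norm_num) (by omega) (by omega) hacts hflag
    hXiso hXcent α htodd ht.ne_one hqt hqodd (Nat.card_congr e.toEquiv)⟩
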